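/- Let d, K, H be positive integers, β ≥ 0, λ ≥ 1, and for each pair (k, h) ∈ [K] × [H] let φ_h^k ∈ ℝ^d with ‖φ_h^k‖₂ ≤ 1. For each h ∈ [H] and k ∈ [K] define Λ_h^k = λ·I_d + Σ_{t=1}^{k−1} φ_h^t (φ_h^t)ᵀ and the bonus Γ_h^k = β·√((φ_h^k)ᵀ (Λ_h^k)^{−1} φ_h^k). Then Σ_{k=1}^{K} Σ_{h=1}^{H} Γ_h^k ≤ β·H·√(2dK·log((K + λ)/λ)). -/

import Mathlib

/-!
Fix `h`. With `A n = lam • 1 + ∑ t ≤ n, x t (x t)ᵀ` and `q k = (x k)ᵀ (A (k-1))⁻¹ (x k)`, the matrix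
determinant lemma gives `det (A k) = det (A (k-1)) * (1 + q k)`, so that `∑ k ≤ K, log (1 + q k)`
telescopes to `log det (A K) - d log lam` (`log_det_regGram`). Concavity of `log` applied to the
eigenvalues bounds `log det (A K)` by its trace, hence by `d log (lam + K)` (`log_det_le`). Since
`lam ≥ 1`, every `q k` lies in `[0, 1]` (`quad_le_one`), where `q ≤ 2 log (1 + q)`; thus
`∑ k, q k ≤ 2 d log ((K + lam) / lam)` (`sum_quad_le`, the elliptical potential lemma).
Cauchy–Schwarz in `k` turns this into a bound on `∑ k, √(q k)`, and summing over `h` gives the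
factor `H`.
-/

open Matrix

/-- The regularised Gram matrix `lam • 1 + ∑ t ∈ {1, …, n}, x t (x t)ᵀ`. -/
def regGram {d : ℕ} (lam : ℝ) (x : ℕ → Fin d → ℝ) (n : ℕ) : Matrix (Fin d) (Fin d) ℝ :=
  lam • (1 : Matrix (Fin d) (Fin d) ℝ) + ∑ t ∈ Finset.Icc 1 n, vecMulVec (x t) (x t)

lemma posSemidef_sum_vecMulVec {d : ℕ} (x : ℕ → Fin d → ℝ) (s : Finset ℕ) :
    (∑ t ∈ s, vecMulVec (x t) (x t)).PosSemidef :=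
  posSemidef_sum s fun t _ => by simpa using posSemidef_vecMulVec_self_star (x t)

lemma regGram_posDef {d : ℕ} {lam : ℝ} (hlam : 0 < lam) (x : ℕ → Fin d → ℝ) (n : ℕ) :
    (regGram lam x n).PosDef :=
  (PosDef.one.smul hlam).add_posSemidef (posSemidef_sum_vecMulVec x _)

lemma regGram_succ {d : ℕ} (lam : ℝ) (x : ℕ → Fin d → ℝ) (n : ℕ) :
    regGram lam x (n + 1) = regGram lam x n + vecMulVec (x (n + 1)) (x (n + 1)) := by
  simp [regGram, Finset.sum_Icc_succ_top, add_assoc]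

lemma trace_regGram {d : ℕ} (lam : ℝ) (x : ℕ → Fin d → ℝ) (n : ℕ) :
    (regGram lam x n).trace = lam * d + ∑ t ∈ Finset.Icc 1 n, x t ⬝ᵥ x t := by
  simp [regGram, trace_add, trace_smul, trace_sum]

/-- The matrix determinant lemma for a symmetric rank-one update. -/
lemma det_add_vecMulVec_self {d : ℕ} {A : Matrix (Fin d) (Fin d) ℝ} (hA : IsUnit A.det)
    (v : Fin d → ℝ) :
    (A + vecMulVec v v).det = A.det * (1 + v ⬝ᵥ (A⁻¹ *ᵥ v)) := by
  rw [vecMulVec_eq Unit, det_add_replicateCol_mul_replicateRow hA, Matrix.mul_assoc,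
    det_unique (n := Unit)]
  simp [mul_apply, replicateRow, replicateCol, mulVec, dotProduct]

/-- `log det A ≤ d log c` whenever `trace A ≤ d c`: the tangent-line bound
`log (e / c) ≤ e / c - 1` summed over the eigenvalues `e` of `A`. -/
lemma log_det_le {d : ℕ} {A : Matrix (Fin d) (Fin d) ℝ} (hA : A.PosDef) {c : ℝ} (hc : 0 < c)
    (htr : A.trace ≤ d * c) : Real.log A.det ≤ d * Real.log c := by
  have hpos := hA.eigenvalues_pos
  have htr' : ∑ i, hA.1.eigenvalues i ≤ d * c := by
    simpa [hA.1.trace_eq_sum_eigenvalues] using htr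
  have hdet : A.det = ∏ i, hA.1.eigenvalues i := by
    simpa using hA.1.det_eq_prod_eigenvalues
  rw [hdet, Real.log_prod fun i _ => (hpos i).ne']
  have h1 : ∀ i, Real.log (hA.1.eigenvalues i) ≤
      Real.log c + (hA.1.eigenvalues i / c - 1) := fun i => by
    have := Real.log_le_sub_one_of_pos (div_pos (hpos i) hc)
    rw [Real.log_div (hpos i).ne' hc.ne'] at this
    linarith
  have h2 : (∑ i, hA.1.eigenvalues i) / c ≤ d := (div_le_iff₀ hc).2 htr'
  calc ∑ i, Real.log (hA.1.eigenvalues i)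
      ≤ ∑ i, (Real.log c + (hA.1.eigenvalues i / c - 1)) := Finset.sum_le_sum fun i _ => h1 i
    _ = d * Real.log c + ((∑ i, hA.1.eigenvalues i) / c - d) := by
        simp [Finset.sum_add_distrib, Finset.sum_div]
    _ ≤ d * Real.log c := by linarith

lemma quad_nonneg {d : ℕ} {lam : ℝ} (hlam : 0 < lam) (x : ℕ → Fin d → ℝ) (n : ℕ)
    (v : Fin d → ℝ) : 0 ≤ v ⬝ᵥ ((regGram lam x n)⁻¹ *ᵥ v) := by
  simpa using (regGram_posDef hlam x n).inv.posSemidef.dotProduct_mulVec_nonneg v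

/-- Since the regularised Gram matrix dominates the identity, its inverse quadratic form is at
most `1` on the unit ball. -/
lemma quad_le_one {d : ℕ} {lam : ℝ} (hlam : 1 ≤ lam) (x : ℕ → Fin d → ℝ) (n : ℕ)
    {v : Fin d → ℝ} (hv : v ⬝ᵥ v ≤ 1) : v ⬝ᵥ ((regGram lam x n)⁻¹ *ᵥ v) ≤ 1 := by
  have hA := regGram_posDef (zero_lt_one.trans_le hlam) x n
  set w := (regGram lam x n)⁻¹ *ᵥ v with hw
  have hAw : regGram lam x n *ᵥ w = v := by
    rw [hw, mulVec_mulVec, mul_nonsing_inv _ hA.det_pos.ne'.isUnit, one_mulVec]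
  have hww : 0 ≤ w ⬝ᵥ w := by simpa using dotProduct_star_self_nonneg w
  have hS : 0 ≤ w ⬝ᵥ ((∑ t ∈ Finset.Icc 1 n, vecMulVec (x t) (x t)) *ᵥ w) := by
    simpa using (posSemidef_sum_vecMulVec x (Finset.Icc 1 n)).dotProduct_mulVec_nonneg w
  have h1 : w ⬝ᵥ w ≤ v ⬝ᵥ w := by
    have h2 : w ⬝ᵥ (regGram lam x n *ᵥ w) = lam * (w ⬝ᵥ w) +
        w ⬝ᵥ ((∑ t ∈ Finset.Icc 1 n, vecMulVec (x t) (x t)) *ᵥ w) := by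
      simp [regGram, add_mulVec, smul_mulVec, dotProduct_add]
    rw [hAw, dotProduct_comm] at h2
    nlinarith
  -- Cauchy–Schwarz: `q² ≤ (v ⬝ v) (w ⬝ w) ≤ q` for `q = v ⬝ w`, so `q ≤ 1`.
  have h3 : (v ⬝ᵥ w) ^ 2 ≤ (v ⬝ᵥ v) * (w ⬝ᵥ w) := by
    simpa [dotProduct, sq] using Finset.sum_mul_sq_le_sq_mul_sq Finset.univ v w
  nlinarith

/-- The logarithmic determinant telescopes along rank-one updates. -/
lemma log_det_regGram {d : ℕ} {lam : ℝ} (hlam : 0 < lam) (x : ℕ → Fin d → ℝ) (n : ℕ) :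
    Real.log (regGram lam x n).det = d * Real.log lam +
      ∑ k ∈ Finset.Icc 1 n,
        Real.log (1 + x k ⬝ᵥ ((regGram lam x (k - 1))⁻¹ *ᵥ x k)) := by
  induction n with
  | zero => simp [regGram]
  | succ n ih =>
    have hdet := (regGram_posDef hlam x n).det_pos
    have hq := quad_nonneg hlam x n (x (n + 1))
    rw [regGram_succ, det_add_vecMulVec_self hdet.ne'.isUnit,
      Real.log_mul hdet.ne' (by positivity), ih, Finset.sum_Icc_succ_top (by omega)]
    simp [add_assoc]

/-- The elliptical potential lemma. -/
lemma sum_quad_le {d K : ℕ} (hd : 0 < d) {lam : ℝ} (hlam : 1 ≤ lam) (x : ℕ → Fin d → ℝ)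
    (hx : ∀ k ∈ Finset.Icc 1 K, x k ⬝ᵥ x k ≤ 1) :
    ∑ k ∈ Finset.Icc 1 K, x k ⬝ᵥ ((regGram lam x (k - 1))⁻¹ *ᵥ x k) ≤
      2 * d * Real.log ((K + lam) / lam) := by
  have hl : 0 < lam := zero_lt_one.trans_le hlam
  have hKl : 0 < (K : ℝ) + lam := by positivity
  have hd1 : (1 : ℝ) ≤ d := by exact_mod_cast hd
  have htr : (regGram lam x K).trace ≤ d * (K + lam) := by
    have h1 : ∑ t ∈ Finset.Icc 1 K, x t ⬝ᵥ x t ≤ K := by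
      simpa using Finset.sum_le_card_nsmul _ _ 1 hx
    rw [trace_regGram]
    nlinarith [(Nat.cast_nonneg K : (0 : ℝ) ≤ K)]
  have hlog := log_det_le (regGram_posDef hl x K) hKl htr
  rw [log_det_regGram hl] at hlog
  have hterm : ∀ k ∈ Finset.Icc 1 K, x k ⬝ᵥ ((regGram lam x (k - 1))⁻¹ *ᵥ x k) ≤
      2 * Real.log (1 + x k ⬝ᵥ ((regGram lam x (k - 1))⁻¹ *ᵥ x k)) := fun k hk => by
    have h0 := quad_nonneg hl x (k - 1) (x k)
    have h1 := quad_le_one hlam x (k - 1) (hx k hk)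
    generalize x k ⬝ᵥ ((regGram lam x (k - 1))⁻¹ *ᵥ x k) = q at h0 h1
    -- `log (1 + q) ≥ 2 q / (q + 2) ≥ q / 2` for `0 ≤ q ≤ 2`.
    have h2 := Real.le_log_one_add_of_nonneg h0
    have h3 : q / 2 ≤ 2 * q / (q + 2) := by
      rw [div_le_div_iff₀ (by norm_num) (by linarith)]
      nlinarith
    linarith
  have hsum := Finset.sum_le_sum hterm
  rw [← Finset.mul_sum] at hsum
  rw [Real.log_div hKl.ne' hl.ne']
  linarith

/-- Bound on the accumulated exploration bonuses (Lemma on bonus sums):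
`∑ₖ ∑ₕ Γₕᵏ ≤ β H √(2 d K log((K+λ)/λ))`. -/
theorem bonus_sum_bound
    (d K H : ℕ) (hd : 0 < d) (hK : 0 < K) (hH : 0 < H)
    (β lam : ℝ) (hβ : 0 ≤ β) (hlam : 1 ≤ lam)
    (φ : ℕ → ℕ → Fin d → ℝ)
    (hφ : ∀ k ∈ Finset.Icc 1 K, ∀ h ∈ Finset.Icc 1 H,
      Real.sqrt (∑ j, φ k h j ^ 2) ≤ 1)
    (Λ : ℕ → ℕ → Matrix (Fin d) (Fin d) ℝ)
    (hΛ : ∀ k ∈ Finset.Icc 1 K, ∀ h ∈ Finset.Icc 1 H,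
      Λ k h = lam • (1 : Matrix (Fin d) (Fin d) ℝ) +
        ∑ t ∈ Finset.Icc 1 (k - 1), vecMulVec (φ t h) (φ t h))
    (Γ : ℕ → ℕ → ℝ)
    (hΓ : ∀ k ∈ Finset.Icc 1 K, ∀ h ∈ Finset.Icc 1 H,
      Γ k h = β * Real.sqrt (φ k h ⬝ᵥ ((Λ k h)⁻¹ *ᵥ φ k h))) :
    ∑ k ∈ Finset.Icc 1 K, ∑ h ∈ Finset.Icc 1 H, Γ k h ≤
      β * H * Real.sqrt (2 * d * K * Real.log ((K + lam) / lam)) := by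
  have hl : 0 < lam := zero_lt_one.trans_le hlam
  have hh : ∀ h ∈ Finset.Icc 1 H, ∑ k ∈ Finset.Icc 1 K, Γ k h ≤
      β * Real.sqrt (2 * d * K * Real.log ((K + lam) / lam)) := fun h hhH => by
    have hx : ∀ k ∈ Finset.Icc 1 K, φ k h ⬝ᵥ φ k h ≤ 1 := fun k hk => by
      simpa [dotProduct, sq] using Real.sqrt_le_one.1 (hφ k hk h hhH)
    have hsum := sum_quad_le hd hlam (fun k => φ k h) hx
    have hΓ' : ∀ k ∈ Finset.Icc 1 K, Γ k h =
        β * √(φ k h ⬝ᵥ ((regGram lam (fun k => φ k h) (k - 1))⁻¹ *ᵥ φ k h)) := fun k hk => by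
      rw [hΓ k hk h hhH, hΛ k hk h hhH, regGram]
    rw [Finset.sum_congr rfl hΓ', ← Finset.mul_sum]
    refine mul_le_mul_of_nonneg_left (Real.le_sqrt_of_sq_le ?_) hβ
    refine sq_sum_le_card_mul_sum_sq.trans ?_
    rw [Finset.sum_congr rfl fun k _ => Real.sq_sqrt (quad_nonneg hl _ (k - 1) (φ k h)),
      Nat.card_Icc, Nat.add_sub_cancel]
    calc _ ≤ (K : ℝ) * (2 * d * Real.log ((K + lam) / lam)) :=
          mul_le_mul_of_nonneg_left hsum K.cast_nonneg
      _ = _ := by ring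
  rw [Finset.sum_comm]
  refine (Finset.sum_le_card_nsmul _ _ _ hh).trans_eq ?_
  rw [Nat.card_Icc, Nat.add_sub_cancel, nsmul_eq_mul]
  ring
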